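/- arXiv:1503.03974 — 10 statements merged into one kernel-verified Lean document; each statement's English description precedes it below -/
import Mathlib

section
/- Let G = (V, A) be a finite directed graph without loops or parallel arcs, where every arc a = (u, v) carries a real weight w(u, v). Then G admits a feasible potential (a function p : V → ℝ such that w(u, v) − p(v) + p(u) ≥ 0 for every arc (u, v)) if and only if G is conservative (every directed cycle of G has nonnegative total weight). -/
/-!
A feasible potential makes the reduced weights of the arcs of a closed walk nonnegative, and along
the closed walk the potential differences telescope to zero, so the total weight is nonnegative.

Conversely, let `p v` be the infimum of the weights of all walks ending at `v` (from any starting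
node, the empty walk included). Appending an arc `(u, v)` to a walk ending at `u` gives
`p v ≤ p u + w u v`, which is feasibility. The only point is that the infimum is over a set bounded
below (`IsWalk.neg_le_weight`): a walk with at least `|V|` arcs repeats a node, and cutting out the
closed walk between the two visits does not increase the weight, so it suffices to bound the
weights of walks with at most `|V|` arcs.
-/

/-- The first `n + 1` values of `f` form a walk with `n` arcs in `A`. Encoding walks by functions
on all of `ℕ` makes the values of `f` beyond `n` irrelevant. -/
def IsWalk {V : Type*} (A : Set (V × V)) (f : ℕ → V) (n : ℕ) : Prop :=
  ∀ k < n, (f k, f (k + 1)) ∈ A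

/-- The total weight of the first `n` steps of `f`. -/
def walkWeight {V : Type*} (w : V → V → ℝ) (f : ℕ → V) (n : ℕ) : ℝ :=
  ∑ k ∈ Finset.range n, w (f k) (f (k + 1))

/-- Transfers nonnegativity from closed walks indexed by `ZMod (ℓ + 1)` to closed walks indexed by
an initial segment of `ℕ`. -/
lemma IsWalk.weight_nonneg_of_closed {V : Type*} {A : Set (V × V)} {w : V → V → ℝ}
    (hc : ∀ (ℓ : ℕ) (c : ZMod (ℓ + 1) → V),
      (∀ i, (c i, c (i + 1)) ∈ A) → 0 ≤ ∑ i, w (c i) (c (i + 1)))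
    {f : ℕ → V} {ℓ : ℕ} (hf : IsWalk A f (ℓ + 1)) (hclosed : f (ℓ + 1) = f 0) :
    0 ≤ walkWeight w f (ℓ + 1) := by
  have hsucc : ∀ x : ZMod (ℓ + 1), f (x + 1).val = f (x.val + 1) := by
    intro x
    have hx : x.val < ℓ + 1 := ZMod.val_lt x
    have hval : (x + 1).val = (x.val + 1) % (ℓ + 1) := by
      rw [← ZMod.val_natCast, Nat.cast_add, ZMod.natCast_zmod_val, Nat.cast_one]
    rw [hval]
    rcases Nat.lt_or_eq_of_le (Nat.succ_le_of_lt hx) with h | h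
    · rw [Nat.mod_eq_of_lt h]
    · rw [show x.val + 1 = ℓ + 1 from h, Nat.mod_self, hclosed]
  have h := hc ℓ (fun x => f x.val) (fun x => by
    simp only [hsucc]
    exact hf _ (ZMod.val_lt x))
  simp only [hsucc] at h
  have hsum : ∑ x : ZMod (ℓ + 1), w (f x.val) (f (x.val + 1)) = walkWeight w f (ℓ + 1) :=
    (Finset.sum_range (fun k => w (f k) (f (k + 1)))).symm
  rwa [hsum] at h

/-- In a graph all of whose closed walks have nonnegative weight, the weights of all walks have a
common lower bound. -/
lemma IsWalk.neg_le_weight {V : Type*} [Fintype V] {A : Set (V × V)} {w : V → V → ℝ}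
    (hc : ∀ (ℓ : ℕ) (c : ZMod (ℓ + 1) → V),
      (∀ i, (c i, c (i + 1)) ∈ A) → 0 ≤ ∑ i, w (c i) (c (i + 1)))
    (n : ℕ) (f : ℕ → V) (hf : IsWalk A f n) :
    -(Fintype.card V * ∑ a : V × V, |w a.1 a.2|) ≤ walkWeight w f n := by
  induction n using Nat.strong_induction_on generalizing f with
  | _ n ih =>
  have hS : 0 ≤ ∑ a : V × V, |w a.1 a.2| := Finset.sum_nonneg fun _ _ => abs_nonneg _
  rcases le_or_gt n (Fintype.card V) with hn | hn
  · have h1 : ∑ k ∈ Finset.range n, -(∑ a : V × V, |w a.1 a.2|) ≤ walkWeight w f n := by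
      refine Finset.sum_le_sum fun k _ => ?_
      have h2 := Finset.single_le_sum (f := fun a : V × V => |w a.1 a.2|)
        (fun _ _ => abs_nonneg _) (Finset.mem_univ (f k, f (k + 1)))
      have h3 := neg_abs_le (w (f k) (f (k + 1)))
      simp only at h2
      linarith
    rw [Finset.sum_const, Finset.card_range, nsmul_eq_mul] at h1
    have h4 : (n : ℝ) * ∑ a : V × V, |w a.1 a.2| ≤ Fintype.card V * ∑ a : V × V, |w a.1 a.2| :=
      mul_le_mul_of_nonneg_right (by exact_mod_cast hn) hS
    linarith
  · -- The walk decomposes as `i` arcs, a closed walk of `d + 1` arcs, and `r` further arcs.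
    obtain ⟨i, d, r, hnr, hrep⟩ : ∃ i d r, n = i + (d + 1) + r ∧ f (i + (d + 1)) = f i := by
      obtain ⟨x, y, hxy, hfxy⟩ := Fintype.exists_ne_map_eq_of_card_lt
        (fun k : Fin (n + 1) => f k) (by simp; omega)
      have hx := x.2
      have hy := y.2
      rcases lt_or_gt_of_ne (Fin.val_ne_of_ne hxy) with h | h
      · refine ⟨x, y - x - 1, n - y, by omega, ?_⟩
        rw [show (x : ℕ) + (y - x - 1 + 1) = y by omega]
        exact hfxy.symm
      · refine ⟨y, x - y - 1, n - x, by omega, ?_⟩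
        rw [show (y : ℕ) + (x - y - 1 + 1) = x by omega]
        exact hfxy
    subst hnr
    have hcyc : 0 ≤ walkWeight w (fun k => f (i + k)) (d + 1) :=
      IsWalk.weight_nonneg_of_closed hc (fun k hk => hf (i + k) (by omega)) hrep
    let g : ℕ → V := fun k => if k ≤ i then f k else f (k + (d + 1))
    have hg1 : ∀ k ≤ i, g k = f k := fun k hk => if_pos hk
    have hg2 : ∀ k, g (i + k) = f (i + (d + 1) + k) := by
      intro k
      rcases Nat.eq_zero_or_pos k with rfl | hk
      · simp [g, hrep]
      · simp only [g]
        rw [if_neg (by omega)]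
        congr 1
        omega
    have hgw : IsWalk A g (i + r) := by
      intro k hk
      rcases lt_or_ge k i with h | h
      · rw [hg1 k h.le, hg1 (k + 1) h]
        exact hf k (by omega)
      · obtain ⟨m, rfl⟩ := Nat.exists_eq_add_of_le h
        rw [add_assoc, hg2, hg2]
        exact hf (i + (d + 1) + m) (by omega)
    have hsum : walkWeight w f (i + (d + 1) + r) =
        walkWeight w g (i + r) + walkWeight w (fun k => f (i + k)) (d + 1) := by
      have hA : ∑ k ∈ Finset.range i, w (g k) (g (k + 1)) =
          ∑ k ∈ Finset.range i, w (f k) (f (k + 1)) := by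
        refine Finset.sum_congr rfl fun k hk => ?_
        have hk := Finset.mem_range.1 hk
        rw [hg1 k hk.le, hg1 (k + 1) hk]
      unfold walkWeight
      rw [Finset.sum_range_add, Finset.sum_range_add, Finset.sum_range_add _ i r, hA]
      simp only [add_assoc i _ 1, hg2]
      simp only [add_assoc]
      ring
    have := ih (i + r) (by omega) g hgw
    linarith

/-- A finite weighted directed graph `(V, A, w)` without loops (and, by the
set-of-pairs encoding, without parallel arcs) admits a feasible potential
(`p : V → ℝ` with `w(u,v) - p(v) + p(u) ≥ 0` on every arc) iff it is
conservative: every directed cycle (encoded as a cyclic sequence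
`c : ZMod (ℓ+1) → V` of nodes all of whose consecutive pairs are arcs) has
nonnegative total weight. -/
theorem stmt_0 {V : Type*} [Fintype V] (A : Set (V × V))
    (hloop : ∀ a ∈ A, a.1 ≠ a.2) (w : V → V → ℝ) :
    (∃ p : V → ℝ, ∀ a ∈ A, 0 ≤ w a.1 a.2 - p a.2 + p a.1) ↔
    (∀ (ℓ : ℕ) (c : ZMod (ℓ + 1) → V),
      (∀ i, (c i, c (i + 1)) ∈ A) → 0 ≤ ∑ i, w (c i) (c (i + 1))) := by
  constructor
  · rintro ⟨p, hp⟩ ℓ c hcA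
    have h1 : 0 ≤ ∑ i, (w (c i) (c (i + 1)) - p (c (i + 1)) + p (c i)) :=
      Finset.sum_nonneg fun i _ => hp _ (hcA i)
    have h2 : ∑ i, p (c (i + 1)) = ∑ i, p (c i) :=
      Equiv.sum_comp (Equiv.addRight (1 : ZMod (ℓ + 1))) (fun i => p (c i))
    rw [Finset.sum_add_distrib, Finset.sum_sub_distrib, h2] at h1
    linarith
  · intro hc
    let W : V → Set ℝ := fun v => {x | ∃ n f, IsWalk A f n ∧ f n = v ∧ x = walkWeight w f n}
    have hbdd : ∀ v, BddBelow (W v) := by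
      refine fun v => ⟨-(Fintype.card V * ∑ a : V × V, |w a.1 a.2|), ?_⟩
      rintro x ⟨n, f, hf, -, rfl⟩
      exact hf.neg_le_weight hc
    have hne : ∀ v, (W v).Nonempty := fun v =>
      ⟨_, 0, fun _ => v, fun k hk => absurd hk (Nat.not_lt_zero k), rfl, rfl⟩
    refine ⟨fun v => sInf (W v), ?_⟩
    rintro ⟨u, v⟩ ha
    have key : sInf (W v) - w u v ≤ sInf (W u) := by
      refine le_csInf (hne u) ?_
      rintro x ⟨n, f, hf, hfn, rfl⟩
      let g : ℕ → V := fun k => if k ≤ n then f k else v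
      have hg : ∀ k ≤ n, g k = f k := fun k hk => if_pos hk
      have hgv : g (n + 1) = v := if_neg (by omega)
      have hmem : walkWeight w f n + w u v ∈ W v := by
        refine ⟨n + 1, g, ?_, hgv, ?_⟩
        · intro k hk
          rcases Nat.lt_succ_iff_lt_or_eq.1 hk with h | rfl
          · rw [hg k h.le, hg (k + 1) h]
            exact hf k h
          · rw [hg k le_rfl, hgv, hfn]
            exact ha
        · unfold walkWeight
          rw [Finset.sum_range_succ, hg n le_rfl, hgv, hfn]
          congr 1
          refine Finset.sum_congr rfl fun k hk => ?_
          have hk := Finset.mem_range.1 hk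
          rw [hg k hk.le, hg (k + 1) hk]
      linarith [csInf_le (hbdd v) hmem]
    simp only
    linarith
end

section
/- Let G = (V, A) be a finite directed graph without loops or parallel arcs in which every arc (u, v) carries an integer weight w(u, v). If G is conservative (every directed cycle has nonnegative total weight), then G admits an integer-valued feasible potential, i.e., a function p : V → ℤ with w(u, v) − p(v) + p(u) ≥ 0 for every arc (u, v). -/
/-!
The potential is minus the shortest-path distance. For a node `u` let `q u` be the infimum of the
weights of all walks starting at `u` (the empty walk included). Prefixing an arc `(u, v)` to a
walk from `v` gives `q u ≤ w u v + q v`, so `p = -q` is feasible.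

The point is that `q` is finite, i.e. that walk weights are bounded below
(`ArcWalk.weight_lower_bound`). A walk starting at `u` inside a node set `S` can be cut at its last
visit to `u` (`ArcWalk.split_last`): the part before is a closed walk, of nonnegative weight by
conservativity, and the part after is one arc followed by a walk inside `S \ {u}`. By induction on
`|S|` the weight is at least `-N |S|`, where `N` bounds all `|w u v|`.
-/

/-- `ArcWalk A w S u x d`: there is a walk (repetitions allowed, possibly empty) from `u` to `x`
along arcs in `A`, all of whose nodes lie in `S`, of total weight `d`. -/
inductive ArcWalk {V : Type*} (A : Set (V × V)) (w : V → V → ℤ) (S : Finset V) :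
    V → V → ℤ → Prop
  | nil (u : V) : u ∈ S → ArcWalk A w S u u 0
  | cons (u v x : V) (d : ℤ) : u ∈ S → (u, v) ∈ A → ArcWalk A w S v x d →
      ArcWalk A w S u x (w u v + d)

namespace ArcWalk

variable {V : Type*} {A : Set (V × V)} {w : V → V → ℤ} {S : Finset V}

lemma start_mem {u x : V} {d : ℤ} (h : ArcWalk A w S u x d) : u ∈ S := by
  cases h <;> assumption

lemma exists_seq {u x : V} {d : ℤ} (h : ArcWalk A w S u x d) :
    ∃ (n : ℕ) (f : ℕ → V), f 0 = u ∧ f n = x ∧ (∀ i < n, (f i, f (i + 1)) ∈ A) ∧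
      d = ∑ i ∈ Finset.range n, w (f i) (f (i + 1)) := by
  induction h with
  | nil u hu => exact ⟨0, fun _ => u, rfl, rfl, by simp, by simp⟩
  | cons u v x d hu ha _ ih =>
    obtain ⟨n, f, h0, hn, hA, hd⟩ := ih
    refine ⟨n + 1, fun i => Nat.casesOn i u f, rfl, hn, ?_, ?_⟩
    · intro i hi
      cases i with
      | zero => simpa [h0] using ha
      | succ i => exact hA i (by omega)
    · rw [Finset.sum_range_succ', hd]
      simp [h0, add_comm]

/-- Closed walks have nonnegative weight in a conservative graph. -/
lemma closed_nonneg
    (hcons : ∀ (ℓ : ℕ) (c : ZMod (ℓ + 1) → V),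
      (∀ i, (c i, c (i + 1)) ∈ A) → 0 ≤ ∑ i, w (c i) (c (i + 1)))
    {u : V} {d : ℤ} (h : ArcWalk A w S u u d) : 0 ≤ d := by
  obtain ⟨n, f, h0, hn, hA, rfl⟩ := h.exists_seq
  cases n with
  | zero => simp
  | succ ℓ =>
    -- `ZMod (ℓ + 1)` unfolds to `Fin (ℓ + 1)`; the wrap-around step uses `f (ℓ + 1) = f 0`.
    have hs : ∀ i : Fin (ℓ + 1), f (i + 1 : Fin (ℓ + 1)).val = f (i.val + 1) := by
      intro i
      rw [Fin.val_add_one]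
      split_ifs with hi
      · subst hi
        simp [h0, hn]
      · rfl
    have key := hcons ℓ (fun i : Fin (ℓ + 1) => f i.val) (fun i : Fin (ℓ + 1) => by
      have hi := hA i.val i.isLt
      rw [← hs] at hi
      exact hi)
    change 0 ≤ ∑ i : Fin (ℓ + 1), w (f i.val) (f (i + 1 : Fin (ℓ + 1)).val) at key
    simp only [hs] at key
    rwa [Fin.sum_univ_eq_sum_range (fun i => w (f i) (f (i + 1)))] at key

/-- A walk either avoids `y`, or splits at its last visit to `y`; in the latter case the remainder
of weight `d₂` is empty or consists of an arc leaving `y` followed by a walk avoiding `y`. -/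
lemma split_last [DecidableEq V] {u x : V} {d : ℤ} (h : ArcWalk A w S u x d) (y : V) :
    ArcWalk A w (S.erase y) u x d ∨
      ∃ d₁ d₂, ArcWalk A w S u y d₁ ∧ d = d₁ + d₂ ∧
        (d₂ = 0 ∨ ∃ z e, d₂ = w y z + e ∧ ArcWalk A w (S.erase y) z x e) := by
  induction h with
  | nil u hu =>
    by_cases huy : u = y
    · subst huy
      exact Or.inr ⟨0, 0, nil u hu, by simp, Or.inl rfl⟩
    · exact Or.inl (nil u (Finset.mem_erase.2 ⟨huy, hu⟩))
  | cons u v x d hu ha _ ih =>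
    rcases ih with ih | ⟨d₁, d₂, h₁, hd, h₂⟩
    · by_cases huy : u = y
      · subst huy
        exact Or.inr ⟨0, w u v + d, nil u hu, by simp, Or.inr ⟨v, d, rfl, ih⟩⟩
      · exact Or.inl (cons u v x d (Finset.mem_erase.2 ⟨huy, hu⟩) ha ih)
    · exact Or.inr ⟨w u v + d₁, d₂, cons u v y d₁ hu ha h₁, by rw [hd]; ring, h₂⟩

lemma weight_lower_bound [DecidableEq V]
    (hcons : ∀ (ℓ : ℕ) (c : ZMod (ℓ + 1) → V),
      (∀ i, (c i, c (i + 1)) ∈ A) → 0 ≤ ∑ i, w (c i) (c (i + 1)))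
    {N : ℤ} (hN : 0 ≤ N) (hw : ∀ u v, -N ≤ w u v) (k : ℕ) :
    ∀ (S : Finset V), S.card = k → ∀ {u x : V} {d : ℤ}, ArcWalk A w S u x d → -(N * k) ≤ d := by
  induction k with
  | zero =>
    intro S hS u x d h
    have := h.start_mem
    simp [Finset.card_eq_zero.1 hS] at this
  | succ k ih =>
    intro S hS u x d h
    rcases h.split_last u with h' | ⟨d₁, d₂, h₁, rfl, h₂⟩
    · exact absurd h'.start_mem (Finset.notMem_erase u S)
    · have hd₁ := closed_nonneg hcons h₁
      have hNk : 0 ≤ N * k := by positivity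
      push_cast
      rcases h₂ with rfl | ⟨z, e, rfl, h₂⟩
      · linarith
      · have he := ih (S.erase u) (by rw [Finset.card_erase_of_mem h.start_mem, hS]; rfl) h₂
        linarith [hw u z]

end ArcWalk

/-- A finite weighted directed graph without loops or parallel arcs, with
integer arc weights, which is conservative (every directed cycle, encoded as a
cyclic sequence `c : ZMod (ℓ+1) → V` of nodes whose consecutive pairs are all
arcs, has nonnegative total weight) admits an integer-valued feasible
potential `p : V → ℤ` with `w(u,v) - p(v) + p(u) ≥ 0` for every arc `(u,v)`. -/
theorem stmt_1 {V : Type*} [Fintype V] (A : Set (V × V))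
    (hloop : ∀ a ∈ A, a.1 ≠ a.2) (w : V → V → ℤ)
    (hcons : ∀ (ℓ : ℕ) (c : ZMod (ℓ + 1) → V),
      (∀ i, (c i, c (i + 1)) ∈ A) → 0 ≤ ∑ i, w (c i) (c (i + 1))) :
    ∃ p : V → ℤ, ∀ a ∈ A, 0 ≤ w a.1 a.2 - p a.2 + p a.1 := by
  classical
  have hw : ∀ u v, -(∑ a : V × V, |w a.1 a.2|) ≤ w u v := fun u v => by
    have := Finset.single_le_sum (f := fun a : V × V => |w a.1 a.2|)
      (fun _ _ => abs_nonneg _) (Finset.mem_univ (u, v))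
    linarith [neg_abs_le (w u v)]
  let D : V → Set ℤ := fun u => {d | ∃ x, ArcWalk A w Finset.univ u x d}
  have hne : ∀ u, (D u).Nonempty := fun u => ⟨0, u, .nil u (Finset.mem_univ u)⟩
  have hbdd : ∀ u, BddBelow (D u) := fun u => ⟨_, fun d ⟨_, h⟩ =>
    ArcWalk.weight_lower_bound hcons (Finset.sum_nonneg fun _ _ => abs_nonneg _) hw _ _ rfl h⟩
  refine ⟨fun u => -sInf (D u), ?_⟩
  rintro ⟨u, v⟩ ha
  obtain ⟨x, hx⟩ := Int.csInf_mem (hne v) (hbdd v)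
  have hle : sInf (D u) ≤ w u v + sInf (D v) :=
    csInf_le (hbdd u) ⟨x, .cons u v x _ (Finset.mem_univ u) ha hx⟩
  change 0 ≤ w u v - -sInf (D v) + -sInf (D u)
  linarith
end

section
/- Let H = (V, A) be an integral-weighted HyTN (its hyperarcs may be standard arcs, multi-head hyperarcs, or multi-tail hyperarcs, all with integer weights). If H is consistent, then H admits an integral feasible scheduling s : V → {−T, −T+1, …, T−1, T}, where T is the sum over all hyperarcs A ∈ A and all their weighted endpoints v of |w_A(v)|. -/
/-!
Every multi-head or multi-tail constraint holds because of one particular endpoint, so picking such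
an endpoint for each hyperarc turns a feasible real scheduling into a solution of a system of
difference constraints `s (head j) ≤ s (tail j) + w j`, whose solutions satisfy the original network
and whose total absolute weight is at most `T`. As the weights are integers, flooring a real
solution gives an integral one.

It remains to bound an integral solution `s` (`exists_bounded_solution`), by compressing the integer
line. An arc with `w j < 0` needs at least `-w j` unit steps between its two endpoints: keep the
steps `k → k + 1` with `k ∈ [s (head j), s (head j) - w j)`. Let `K` be the set of all steps so kept,
and replace `s v` by the number of `k ∈ K` below `s v`. Distances only shrink, so arcs with `w j ≥ 0`
stay satisfied; arcs with `w j < 0` stay satisfied by the choice of `K`; and the new values lie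
between `0` and `|K| ≤ ∑ |w j|`.
-/

/-- A system of integral difference constraints with an integral solution has one whose values are
bounded by the total absolute weight. -/
lemma exists_bounded_solution {V J : Type*} [Fintype J] (tail head : J → V) (w : J → ℤ)
    (s : V → ℤ) (hs : ∀ j, s (head j) ≤ s (tail j) + w j) :
    ∃ s' : V → ℤ, (∀ j, s' (head j) ≤ s' (tail j) + w j) ∧ ∀ v, |s' v| ≤ ∑ j, |w j| := by
  classical
  -- the kept unit steps; the interval is empty when `0 ≤ w j`
  let K : Finset ℤ := Finset.univ.biUnion fun j => Finset.Ico (s (head j)) (s (head j) - w j)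
  have hK : (K.card : ℤ) ≤ ∑ j, |w j| := by
    calc (K.card : ℤ)
        ≤ ((∑ j, (Finset.Ico (s (head j)) (s (head j) - w j)).card : ℕ) : ℤ) := by
          exact_mod_cast Finset.card_biUnion_le
      _ = ∑ j, ((Finset.Ico (s (head j)) (s (head j) - w j)).card : ℤ) := by push_cast; rfl
      _ ≤ ∑ j, |w j| := by
          refine Finset.sum_le_sum fun j _ => ?_
          rw [Int.card_Ico]
          have h₁ := neg_le_abs (w j)
          have h₂ := abs_nonneg (w j)
          omega
  refine ⟨fun v => ((K.filter (· < s v)).card : ℤ), fun j => ?_, fun v => ?_⟩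
  · have hj := hs j
    rcases le_or_gt 0 (w j) with hw | hw
    · have hsub : K.filter (· < s (head j)) ⊆
          K.filter (· < s (tail j)) ∪ Finset.Ico (s (tail j)) (s (head j)) := by
        intro k hk
        simp only [Finset.mem_filter, Finset.mem_union, Finset.mem_Ico] at hk ⊢
        by_cases h : k < s (tail j)
        · exact Or.inl ⟨hk.1, h⟩
        · exact Or.inr ⟨not_lt.mp h, hk.2⟩
      have hcard := (Finset.card_le_card hsub).trans (Finset.card_union_le _ _)
      rw [Int.card_Ico] at hcard
      dsimp only
      omega
    · have hsub : K.filter (· < s (head j)) ∪ Finset.Ico (s (head j)) (s (head j) - w j) ⊆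
          K.filter (· < s (tail j)) := by
        intro k hk
        simp only [Finset.mem_filter, Finset.mem_union, Finset.mem_Ico] at hk ⊢
        rcases hk with hk | hk
        · exact ⟨hk.1, by omega⟩
        · exact ⟨Finset.mem_biUnion.mpr ⟨j, Finset.mem_univ j, Finset.mem_Ico.mpr hk⟩, by omega⟩
      have hdisj : Disjoint (K.filter (· < s (head j)))
          (Finset.Ico (s (head j)) (s (head j) - w j)) := by
        rw [Finset.disjoint_left]
        intro k hk hk'
        simp only [Finset.mem_filter, Finset.mem_Ico] at hk hk'
        omega
      have hcard := Finset.card_le_card hsub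
      rw [Finset.card_union_of_disjoint hdisj, Int.card_Ico] at hcard
      dsimp only
      omega
  · dsimp only
    rw [abs_of_nonneg (Int.natCast_nonneg _)]
    have := Finset.card_filter_le K (· < s v)
    omega


/-- An integral-weighted HyTN `H = (V, A)` whose hyperarcs are standard arcs
(indexed by `ιS`), multi-head hyperarcs (indexed by `ιH`) and multi-tail
hyperarcs (indexed by `ιT`), if consistent (it admits a real feasible
scheduling), admits an integral feasible scheduling `s : V → ℤ` whose values
all lie in `{-T, …, T}` where `T` is the sum of the absolute values of all
the weights of `H`. -/
theorem stmt_3 {V ιS ιH ιT : Type*} [Fintype V] [Fintype ιS] [Fintype ιH] [Fintype ιT]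
    (tailS headS : ιS → V) (wS : ιS → ℤ)
    (tailH : ιH → V) (headsH : ιH → Finset V) (wH : ιH → V → ℤ)
    (headT : ιT → V) (tailsT : ιT → Finset V) (wT : ιT → V → ℤ)
    (hSne : ∀ i, tailS i ≠ headS i)
    (hHne : ∀ i, (headsH i).Nonempty) (hHt : ∀ i, tailH i ∉ headsH i)
    (hTne : ∀ i, (tailsT i).Nonempty) (hTt : ∀ i, headT i ∉ tailsT i)
    (hcons : ∃ s : V → ℝ,
      (∀ i, s (headS i) - s (tailS i) ≤ (wS i : ℝ)) ∧
      (∀ i, (headsH i).inf' (hHne i) (fun v => s v - (wH i v : ℝ)) ≤ s (tailH i)) ∧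
      (∀ i, s (headT i) ≤ (tailsT i).sup' (hTne i) (fun v => s v + (wT i v : ℝ)))) :
    ∃ s : V → ℤ,
      ((∀ i, s (headS i) - s (tailS i) ≤ wS i) ∧
       (∀ i, (headsH i).inf' (hHne i) (fun v => s v - wH i v) ≤ s (tailH i)) ∧
       (∀ i, s (headT i) ≤ (tailsT i).sup' (hTne i) (fun v => s v + wT i v))) ∧
      (∀ v, |s v| ≤ (∑ i, |wS i|) + (∑ i, ∑ v ∈ headsH i, |wH i v|)
        + (∑ i, ∑ v ∈ tailsT i, |wT i v|)) := by
  obtain ⟨s, hS, hH, hT⟩ := hcons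
  -- the endpoints witnessing the multi-head and multi-tail constraints
  have hH' : ∀ i, ∃ v ∈ headsH i, s v - (wH i v : ℝ) ≤ s (tailH i) := fun i =>
    (Finset.inf'_le_iff _).mp (hH i)
  have hT' : ∀ i, ∃ v ∈ tailsT i, s (headT i) ≤ s v + (wT i v : ℝ) := fun i =>
    (Finset.le_sup'_iff _).mp (hT i)
  choose a ha hsa using hH'
  choose b hb hsb using hT'
  have floor_le : ∀ (x y : ℝ) (n : ℤ), x ≤ y + n → ⌊x⌋ ≤ ⌊y⌋ + n := fun x y n h => by
    rw [← Int.floor_add_intCast]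
    exact Int.floor_le_floor h
  obtain ⟨s', hs', hbound⟩ := exists_bounded_solution (J := ιS ⊕ ιH ⊕ ιT)
    (Sum.elim tailS (Sum.elim tailH b)) (Sum.elim headS (Sum.elim a headT))
    (Sum.elim wS (Sum.elim (fun i => wH i (a i)) (fun i => wT i (b i))))
    (fun v => ⌊s v⌋) (by
      rintro (i | i | i)
      · exact floor_le _ _ _ (by simpa [add_comm] using hS i)
      · exact floor_le _ _ _ (by simpa using hsa i)
      · exact floor_le _ _ _ (by simpa using hsb i))
  refine ⟨s', ⟨fun i => ?_, fun i => ?_, fun i => ?_⟩, fun v => (hbound v).trans ?_⟩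
  · have h := hs' (Sum.inl i)
    simp only [Sum.elim_inl] at h
    omega
  · have h := hs' (Sum.inr (Sum.inl i))
    simp only [Sum.elim_inl, Sum.elim_inr] at h
    exact (Finset.inf'_le_iff _).mpr ⟨a i, ha i, by omega⟩
  · have h := hs' (Sum.inr (Sum.inr i))
    simp only [Sum.elim_inr] at h
    exact (Finset.le_sup'_iff _).mpr ⟨b i, hb i, h⟩
  · simp only [Fintype.sum_sum_type, Sum.elim_inl, Sum.elim_inr, ← add_assoc]
    gcongr with i _ i _
    · exact Finset.single_le_sum (f := fun v => |wH i v|) (fun _ _ => abs_nonneg _) (ha i)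
    · exact Finset.single_le_sum (f := fun v => |wT i v|) (fun _ _ => abs_nonneg _) (hb i)
end

section
/- Let φ = ⋀_{i=1}^m (α_i ∨ β_i ∨ γ_i) be a boolean 3-CNF formula over variables x_1, …, x_n, where each literal is some x_j or its negation. Let H_φ = (V, A) be the HyTN with nodes V = {z} ∪ {x_i, x̄_i : 1 ≤ i ≤ n} ∪ {C_j : 1 ≤ j ≤ m} and hyperarcs: for each variable i, the standard arcs (z, x_i, 1), (x_i, z, 0), (z, x̄_i, 1), (x̄_i, z, 0), the multi-tail hyperarc with tails {x_i, x̄_i}, head z and both weights −1, and the multi-head hyperarc with tail z, heads {x_i, x̄_i} and both weights 0; and for each clause j, the standard arcs (z, C_j, 1), (C_j, z, −1) and the multi-tail hyperarc with tails {α_j, β_j, γ_j} (the nodes of its three literals), head C_j and all weights 0. Then φ is satisfiable if and only if H_φ is consistent. -/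
/-!
The multi-head hyperarcs keep one of `x_i`, `x̄_i` at time at most `s z`, and each clause node sits
at time exactly `s z + 1`, so its multi-tail hyperarc says that some literal of the clause is
scheduled at `s z + 1` or later. Reading "scheduled at `s z + 1` or later" as "true" turns a
feasible scheduling into a satisfying assignment, since a literal and its negation are never both
late. Conversely an assignment gives the scheduling with `z` at `0`, clause nodes and true
literals at `1`, and false literals at `0`.
-/

/-- The node set of the HyTN `H_φ` associated to a 3-CNF formula `φ` with `n`
variables and `m` clauses: the reference node `z`, a node `pos i` for each
variable `x_i`, a node `neg i` for its negation `x̄_i`, and a node `cl j` for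
each clause `C_j`. -/
inductive SatNode (n m : ℕ) : Type where
  | z : SatNode n m
  | pos (i : Fin n) : SatNode n m
  | neg (i : Fin n) : SatNode n m
  | cl (j : Fin m) : SatNode n m

/-- The node representing a literal: the pair `(i, b)` stands for `x_i` when
`b = true` and for `x̄_i` when `b = false`. -/
def litNode {n m : ℕ} (l : Fin n × Bool) : SatNode n m :=
  if l.2 then .pos l.1 else .neg l.1

/-- A 3-CNF formula `φ = ⋀_j (α_j ∨ β_j ∨ γ_j)` (each clause being a triple of
literals, a literal `(i,b)` being satisfied by `ν` when `ν i = b`) is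
satisfiable iff the HyTN `H_φ` is consistent.  The constraints of `H_φ` are:
for each variable `i` the standard arcs `(z, x_i, 1)`, `(x_i, z, 0)`,
`(z, x̄_i, 1)`, `(x̄_i, z, 0)`, the multi-tail hyperarc with tails
`{x_i, x̄_i}`, head `z` and weights `-1` (imposing
`s z ≤ max (s x_i - 1) (s x̄_i - 1)`), and the multi-head hyperarc with tail
`z`, heads `{x_i, x̄_i}` and weights `0` (imposing
`s z ≥ min (s x_i) (s x̄_i)`); and for each clause `j` the standard arcs
`(z, C_j, 1)`, `(C_j, z, -1)` and the multi-tail hyperarc with tails the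
nodes of its three literals, head `C_j` and weights `0`. -/
theorem stmt_4 {n m : ℕ} (hn : 1 ≤ n) (hm : 1 ≤ m)
    (clause : Fin m → (Fin n × Bool) × (Fin n × Bool) × (Fin n × Bool)) :
    (∃ ν : Fin n → Bool, ∀ j,
        ν (clause j).1.1 = (clause j).1.2 ∨
        ν (clause j).2.1.1 = (clause j).2.1.2 ∨
        ν (clause j).2.2.1 = (clause j).2.2.2) ↔
    (∃ s : SatNode n m → ℝ,
      (∀ i : Fin n,
        s (.pos i) - s .z ≤ 1 ∧ s .z - s (.pos i) ≤ 0 ∧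
        s (.neg i) - s .z ≤ 1 ∧ s .z - s (.neg i) ≤ 0 ∧
        s .z ≤ max (s (.pos i) + (-1)) (s (.neg i) + (-1)) ∧
        min (s (.pos i) - 0) (s (.neg i) - 0) ≤ s .z) ∧
      (∀ j : Fin m,
        s (.cl j) - s .z ≤ 1 ∧ s .z - s (.cl j) ≤ -1 ∧
        s (.cl j) ≤ max (s (litNode (clause j).1) + 0)
          (max (s (litNode (clause j).2.1) + 0)
            (s (litNode (clause j).2.2) + 0)))) := by
  constructor
  · rintro ⟨ν, hν⟩
    let s : SatNode n m → ℝ := fun v => match v with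
      | .z => 0
      | .pos i => if ν i then 1 else 0
      | .neg i => if ν i then 0 else 1
      | .cl _ => 1
    have hlit : ∀ l : Fin n × Bool, ν l.1 = l.2 → s (litNode l) = 1 := by
      rintro ⟨i, b⟩ h
      cases b <;> simp_all [litNode, s]
    refine ⟨s, fun i => ?_, fun j => ⟨by simp [s], by simp [s], ?_⟩⟩
    · cases h : ν i <;> simp [s, h]
    · simp only [add_zero, le_max_iff]
      rcases hν j with h | h | h
      · exact Or.inl (hlit _ h).ge
      · exact Or.inr (Or.inl (hlit _ h).ge)
      · exact Or.inr (Or.inr (hlit _ h).ge)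
  · rintro ⟨s, hvar, hcl⟩
    let ν : Fin n → Bool := fun i => decide (s .z + 1 ≤ s (.pos i))
    have hlit : ∀ l : Fin n × Bool, s .z + 1 ≤ s (litNode l) → ν l.1 = l.2 := by
      rintro ⟨i, b⟩ h
      cases b
      · -- A late `x̄_i` forces `x_i` to be the head realising the multi-head minimum.
        have hneg : s .z + 1 ≤ s (.neg i) := by simpa [litNode] using h
        have hmin := (hvar i).2.2.2.2.2
        have hpos : s (.pos i) < s .z + 1 := by
          rcases min_le_iff.mp hmin with h' | h' <;> linarith
        simpa [ν] using hpos
      · simpa [ν, litNode] using h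
    refine ⟨ν, fun j => ?_⟩
    obtain ⟨-, hge, hmax⟩ := hcl j
    simp only [add_zero, le_max_iff] at hmax
    rcases hmax with h | h | h
    · exact Or.inl (hlit _ (by linarith))
    · exact Or.inr (Or.inl (hlit _ (by linarith)))
    · exact Or.inr (Or.inr (hlit _ (by linarith)))
end

section
/- A multi-head HyTN that contains a negative cycle admits no feasible scheduling. -/
/-!
Given a feasible scheduling `s`, send each node `v` to a head `f v` of `a v` at which the minimum of
`s u - w (a v) u` is attained. Feasibility gives `s (f v) - s v ≤ w (a v) (f v)` on `S`, and `f` maps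
`S` into itself. As `V` is finite, some `y ∈ S` is periodic under `f`; its orbit over one minimal
period is a finite cyclic sequence, and the inequalities telescope along it to show that its weight
is at least `0`, contradicting negativity.
-/

/-- A multi-head HyTN (hyperarcs indexed by `ι`, each with tail `tail i`,
nonempty head set `heads i` not containing the tail, and weights `w i`) that
contains a negative cycle admits no feasible scheduling.  A cycle is a pair
`(S, C)` (with the tail-selection function `a` witnessing that every `v ∈ S`
is the tail of exactly one hyperarc `a v ∈ C`) such that `S` is nonempty and
equals the union of `{tail i} ∪ heads i` over `i ∈ C`; it is negative when
every finite cyclic sequence `v 0, v 1, …, v p` (with `v (t+1)` a head of the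
hyperarc `a (v t)`, `v p = v 0`, and no other repetition) has total weight
`∑_{t<p} w (a (v t)) (v (t+1)) < 0`. -/
theorem stmt_6 {V ι : Type*} [Fintype V] [Fintype ι]
    (tail : ι → V) (heads : ι → Finset V) (w : ι → V → ℝ)
    (hne : ∀ i, (heads i).Nonempty) (hnt : ∀ i, tail i ∉ heads i)
    (S : Set V) (C : Set ι) (a : V → ι)
    (hSne : S.Nonempty)
    (hS : ∀ v : V, v ∈ S ↔ ∃ i ∈ C, v = tail i ∨ v ∈ heads i)
    (ha : ∀ v ∈ S, a v ∈ C ∧ tail (a v) = v)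
    (hauniq : ∀ i ∈ C, a (tail i) = i)
    (hneg : ∀ (p : ℕ) (v : ℕ → V), 1 ≤ p → v 0 ∈ S →
      (∀ t < p, v (t + 1) ∈ heads (a (v t))) → v p = v 0 →
      (∀ t < p, ∀ t' < p, v t = v t' → t = t') →
      ∑ t ∈ Finset.range p, w (a (v t)) (v (t + 1)) < 0) :
    ¬ ∃ s : V → ℝ, ∀ i, (heads i).inf' (hne i) (fun u => s u - w i u) ≤ s (tail i) := by
  rintro ⟨s, hs⟩
  have hf : ∀ v, ∃ u ∈ heads (a v),
      (heads (a v)).inf' (hne (a v)) (fun u => s u - w (a v) u) = s u - w (a v) u :=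
    fun v => Finset.exists_mem_eq_inf' (hne (a v)) _
  choose f hfmem hfmin using hf
  have hfS : ∀ v ∈ S, f v ∈ S := fun v hv => (hS _).2 ⟨a v, (ha v hv).1, Or.inr (hfmem v)⟩
  have hfw : ∀ v ∈ S, s (f v) - s v ≤ w (a v) (f v) := by
    intro v hv
    have h := hs (a v)
    rw [hfmin v, (ha v hv).2] at h
    linarith
  have hiter : ∀ v ∈ S, ∀ n : ℕ, f^[n] v ∈ S := by
    intro v hv n
    induction n with
    | zero => exact hv
    | succ n ih => rw [Function.iterate_succ_apply']; exact hfS _ ih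
  obtain ⟨x, hx⟩ := hSne
  -- Pigeonhole: two iterates of `x` agree, so the earlier one is a periodic point.
  obtain ⟨y, hyS, hyp⟩ : ∃ y ∈ S, y ∈ Function.periodicPts f := by
    obtain ⟨m, n, hmn, heq⟩ := Set.finite_univ.exists_lt_map_eq_of_forall_mem
      (f := fun n : ℕ => f^[n] x) (fun _ => Set.mem_univ _)
    refine ⟨f^[m] x, hiter x hx m, n - m, Nat.sub_pos_of_lt hmn, ?_⟩
    change f^[n - m] (f^[m] x) = f^[m] x
    rw [← Function.iterate_add_apply, Nat.sub_add_cancel hmn.le]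
    exact heq.symm
  have hper : f^[Function.minimalPeriod f y] y = y := Function.iterate_minimalPeriod
  have hlt := hneg (Function.minimalPeriod f y) (fun n => f^[n] y)
    (Function.minimalPeriod_pos_of_mem_periodicPts hyp) hyS
    (fun t _ => by
      simp only [Function.iterate_succ_apply']
      exact hfmem _)
    hper
    (fun t ht t' ht' h => Function.iterate_injOn_Iio_minimalPeriod ht ht' h)
  have hle : ∑ t ∈ Finset.range (Function.minimalPeriod f y), (s (f^[t + 1] y) - s (f^[t] y)) ≤
      ∑ t ∈ Finset.range (Function.minimalPeriod f y), w (a (f^[t] y)) (f^[t + 1] y) := by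
    refine Finset.sum_le_sum fun t _ => ?_
    rw [Function.iterate_succ_apply']
    exact hfw _ (hiter y hyS t)
  rw [Finset.sum_range_sub (fun t => s (f^[t] y)), hper, Function.iterate_zero_apply, sub_self]
    at hle
  exact absurd hlt (not_lt.2 hle)
end

section
/- A multi-head HyTN H = (V, A) in which every node is the tail of at least one hyperarc is consistent if and only if it is conservative, i.e., if and only if it contains no negative cycle. -/
/-!
The hyperarcs say that an adversary picks a hyperarc at each node and the scheduler answers with
one of its heads; a hyperarc is satisfied by `s` when some head `u` has `s u - w u ≤ s (tail)`.

Consistent implies conservative: inside a cycle `(S, C)`, following a head that satisfies the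
constraint at each node leads, by finiteness, to a simple closed sequence, along which the weights
dominate the telescoping increments of `s`; its total weight is therefore at least `0`.

Conservative implies consistent, in two steps.

* One hyperarc `a v` per node (`exists_schedule_of_choice`). Take a maximal set `D` of nodes that
  admits a schedule satisfied within `D`. Any edge from outside into `D` would let `D` grow, so
  the complement of `D` is closed under heads. If it were nonempty, it would be the node set of a
  cycle, which is not negative and hence contains a simple closed sequence of weight at least `0`;
  the partial sums of its weights extend the schedule to `D` together with this sequence.

* Reduction to that case (`exists_schedule_of_forall_choice`), by induction on the set of
  hyperarcs. If a node `x` is the tail of several hyperarcs, split these into two groups and take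
  schedules `s₁`, `s₂` for the two smaller networks, normalized to `s₁ x = s₂ x = 0`. Their
  pointwise minimum is feasible for the whole network: a constraint at `t` is inherited from
  whichever schedule attains the minimum at `t`, and at `x` both do.
-/

section
variable {V ι : Type*}

/-- A network with the single hyperarc `a v` at each node `v` is consistent as soon as every
nonempty head-closed set of nodes contains a simple closed sequence of nonnegative weight. -/
lemma exists_schedule_of_choice [Finite V] (heads : ι → Finset V) (w : ι → V → ℝ) (a : V → ι)
    (hcyc : ∀ S : Set V, S.Nonempty → (∀ v ∈ S, ∀ u ∈ heads (a v), u ∈ S) →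
      ∃ (p : ℕ) (v : ℕ → V), 1 ≤ p ∧ v 0 ∈ S ∧ (∀ t < p, v (t + 1) ∈ heads (a (v t))) ∧
        v p = v 0 ∧ (∀ t < p, ∀ t' < p, v t = v t' → t = t') ∧
        0 ≤ ∑ t ∈ Finset.range p, w (a (v t)) (v (t + 1))) :
    ∃ s : V → ℝ, ∀ v, ∃ u ∈ heads (a v), s u - w (a v) u ≤ s v := by
  classical
  obtain ⟨D, ⟨s, hs⟩, hmax⟩ := (Set.toFinite {D : Set V | ∃ s : V → ℝ, ∀ v ∈ D,
    ∃ u ∈ heads (a v), u ∈ D ∧ s u - w (a v) u ≤ s v}).exists_maximal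
      ⟨∅, fun _ => 0, by simp⟩
  have hclosed : ∀ v ∈ Dᶜ, ∀ u ∈ heads (a v), u ∈ Dᶜ := by
    intro v hv u hu huD
    refine hv (hmax (y := insert v D) ⟨fun x => if x ∈ D then s x else s u - w (a v) u, ?_⟩
      (Set.subset_insert v D) (Set.mem_insert v D))
    intro x hx
    rcases hx with rfl | hx
    · exact ⟨u, hu, Or.inr huD, by simp [huD, show x ∉ D from hv]⟩
    · obtain ⟨y, hy, hyD, hle⟩ := hs x hx
      exact ⟨y, hy, Or.inr hyD, by simpa [hyD, hx] using hle⟩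
  have hD : Dᶜ = ∅ := by
    by_contra hne
    obtain ⟨p, v, hp, hv0, hstep, hclose, hinj, hsum⟩ :=
      hcyc Dᶜ (Set.nonempty_iff_ne_empty.2 hne) hclosed
    have hout : ∀ t, t ≤ p → v t ∉ D := by
      intro t
      induction t with
      | zero => exact fun _ => hv0
      | succ t ih => exact fun ht => hclosed _ (ih (by omega)) _ (hstep t (by omega))
    set g : ℕ → ℝ := fun t => ∑ k ∈ Finset.range t, w (a (v k)) (v (k + 1)) with hg
    -- On the closed sequence the schedule at `v t` is the partial sum `g t`.
    let s' : V → ℝ := fun x =>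
      if x ∈ D then s x else if h : ∃ t < p, v t = x then g h.choose else 0
    have hs' : ∀ t < p, s' (v t) = g t := by
      intro t ht
      have h : ∃ t' < p, v t' = v t := ⟨t, ht, rfl⟩
      have hc : h.choose = t := hinj _ h.choose_spec.1 _ ht h.choose_spec.2
      simp only [s', if_neg (hout t ht.le), dif_pos h, hc]
    have hmem : ∀ t ≤ p, ∃ k < p, v k = v t := by
      intro t ht
      rcases ht.lt_or_eq with h | rfl
      · exact ⟨t, h, rfl⟩
      · exact ⟨0, hp, hclose.symm⟩
    refine hv0 (hmax (y := D ∪ {x | ∃ t < p, v t = x}) ⟨s', ?_⟩ Set.subset_union_left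
      (Or.inr ⟨0, hp, rfl⟩))
    rintro x (hx | ⟨t, ht, rfl⟩)
    · obtain ⟨y, hy, hyD, hle⟩ := hs x hx
      exact ⟨y, hy, Or.inl hyD, by simpa [s', hyD, hx] using hle⟩
    · refine ⟨v (t + 1), hstep t ht, Or.inr (hmem _ ht), ?_⟩
      have hgs : g (t + 1) = g t + w (a (v t)) (v (t + 1)) := Finset.sum_range_succ _ _
      rw [hs' t ht]
      rcases (show t + 1 ≤ p from ht).lt_or_eq with h | h
      · rw [hs' _ h]; linarith
      -- The last edge returns to `v 0`, where the schedule is `0`, at most the total weight.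
      · have h0 : s' (v (t + 1)) = 0 := by
          rw [h, hclose, hs' 0 hp]; simp [hg]
        have htot : 0 ≤ g (t + 1) := by rw [h]; exact hsum
        rw [h0]; linarith
  refine ⟨s, fun v => ?_⟩
  obtain ⟨u, hu, -, hle⟩ := hs v (by rw [Set.compl_empty_iff.1 hD]; trivial)
  exact ⟨u, hu, hle⟩

/-- If every selection of one hyperarc per node gives a consistent network, then so does every
set `B` of hyperarcs that has each node as a tail. -/
lemma exists_schedule_of_forall_choice (tail : ι → V) (heads : ι → Finset V) (w : ι → V → ℝ)
    (hsel : ∀ a : V → ι, (∀ v, tail (a v) = v) →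
      ∃ s : V → ℝ, ∀ v, ∃ u ∈ heads (a v), s u - w (a v) u ≤ s v)
    (B : Finset ι) (hB : ∀ v, ∃ i ∈ B, tail i = v) :
    ∃ s : V → ℝ, ∀ i ∈ B, ∃ u ∈ heads i, s u - w i u ≤ s (tail i) := by
  classical
  induction B using Finset.strongInduction with
  | H B ih =>
  by_cases hinj : ∀ i ∈ B, ∀ j ∈ B, tail i = tail j → i = j
  · choose a haB ha using hB
    obtain ⟨s, hs⟩ := hsel a ha
    refine ⟨s, fun i hi => ?_⟩
    have := hs (tail i)
    rwa [hinj _ (haB (tail i)) i hi (ha _)] at this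
  · push Not at hinj
    obtain ⟨i, hi, j, hj, hij, hne⟩ := hinj
    obtain ⟨s₁, h₁⟩ := ih (B.erase i) (Finset.erase_ssubset hi) (by
      intro v
      obtain ⟨k, hk, hkv⟩ := hB v
      by_cases hki : k = i
      · exact ⟨j, by simp [hj, hne.symm], by rw [← hij, ← hki, hkv]⟩
      · exact ⟨k, by simp [hk, hki], hkv⟩)
    obtain ⟨s₂, h₂⟩ := ih (B.filter fun k => tail k = tail i → k = i)
      (Finset.filter_ssubset.2 ⟨j, hj, fun h => hne (h hij.symm).symm⟩) (by
      intro v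
      obtain ⟨k, hk, hkv⟩ := hB v
      by_cases hki : tail k = tail i
      · exact ⟨i, by simp [hi], by rw [← hki, hkv]⟩
      · exact ⟨k, by simp [hk, hki], hkv⟩)
    refine ⟨fun v => min (s₁ v - s₁ (tail i)) (s₂ v - s₂ (tail i)), fun k hk => ?_⟩
    have from₁ : k ≠ i → s₁ (tail k) - s₁ (tail i) ≤ s₂ (tail k) - s₂ (tail i) →
        ∃ u ∈ heads k, min (s₁ u - s₁ (tail i)) (s₂ u - s₂ (tail i)) - w k u ≤
          min (s₁ (tail k) - s₁ (tail i)) (s₂ (tail k) - s₂ (tail i)) := by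
      intro hki hle
      obtain ⟨u, hu, h⟩ := h₁ k (by simp [hk, hki])
      refine ⟨u, hu, ?_⟩
      rw [min_eq_left hle]
      linarith [min_le_left (s₁ u - s₁ (tail i)) (s₂ u - s₂ (tail i))]
    have from₂ : (tail k = tail i → k = i) →
        s₂ (tail k) - s₂ (tail i) ≤ s₁ (tail k) - s₁ (tail i) →
        ∃ u ∈ heads k, min (s₁ u - s₁ (tail i)) (s₂ u - s₂ (tail i)) - w k u ≤
          min (s₁ (tail k) - s₁ (tail i)) (s₂ (tail k) - s₂ (tail i)) := by
      intro hki hle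
      obtain ⟨u, hu, h⟩ := h₂ k (by simpa [hk] using hki)
      refine ⟨u, hu, ?_⟩
      rw [min_eq_right hle]
      linarith [min_le_right (s₁ u - s₁ (tail i)) (s₂ u - s₂ (tail i))]
    by_cases hki : k = i
    · exact from₂ (fun _ => hki) (by simp [hki])
    · by_cases hkt : tail k = tail i
      · exact from₁ hki (by simp [hkt])
      · rcases le_total (s₁ (tail k) - s₁ (tail i)) (s₂ (tail k) - s₂ (tail i)) with h | h
        · exact from₁ hki h
        · exact from₂ (fun h' => absurd h' hkt) h

/-- Every point of a finite type reaches, under iteration of `f`, a point where the orbit is a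
simple closed sequence. -/
lemma exists_simple_orbit [Finite V] (f : V → V) (x : V) :
    ∃ m p : ℕ, 1 ≤ p ∧ f^[p] (f^[m] x) = f^[m] x ∧
      ∀ t < p, ∀ t' < p, f^[t] (f^[m] x) = f^[t'] (f^[m] x) → t = t' := by
  have key : ∃ m n : ℕ, m < n ∧ f^[m] x = f^[n] x := by
    obtain ⟨m, n, hmn, h⟩ := Finite.exists_ne_map_eq_of_infinite (fun n : ℕ => f^[n] x)
    rcases hmn.lt_or_gt with h' | h'
    · exact ⟨m, n, h', h⟩
    · exact ⟨n, m, h', h.symm⟩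
  obtain ⟨m, n, hmn, h⟩ := key
  have hper : f^[m] x ∈ Function.periodicPts f := by
    refine ⟨n - m, by omega, ?_⟩
    change f^[n - m] (f^[m] x) = f^[m] x
    rw [← Function.iterate_add_apply, Nat.sub_add_cancel hmn.le, h]
  exact ⟨m, Function.minimalPeriod f (f^[m] x),
    Function.minimalPeriod_pos_of_mem_periodicPts hper, Function.iterate_minimalPeriod,
    fun t ht t' ht' he => Function.iterate_injOn_Iio_minimalPeriod ht ht' he⟩

end

/-- A multi-head HyTN `H = (V, A)` (hyperarcs indexed by `ι`, each with tail
`tail i`, nonempty head set `heads i` not containing the tail, and real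
weights `w i`) in which every node is the tail of at least one hyperarc is
consistent (admits a feasible scheduling `s` with
`s (tail i) ≥ min_{u ∈ heads i} (s u - w i u)` for all `i`) iff it is
conservative, i.e. contains no negative cycle.  A cycle is a pair `(S, C)`
(with the tail-selection function `a` witnessing that every `v ∈ S` is the
tail of exactly one hyperarc `a v ∈ C`) with `S` nonempty and equal to the
union of `{tail i} ∪ heads i` over `i ∈ C`; it is negative when every finite
cyclic sequence `v 0, …, v p` in it has total weight `< 0`. -/
theorem stmt_7 {V ι : Type*} [Fintype V] [Fintype ι]
    (tail : ι → V) (heads : ι → Finset V) (w : ι → V → ℝ)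
    (hne : ∀ i, (heads i).Nonempty) (hnt : ∀ i, tail i ∉ heads i)
    (htail : ∀ v : V, ∃ i, tail i = v) :
    (∃ s : V → ℝ, ∀ i, (heads i).inf' (hne i) (fun u => s u - w i u) ≤ s (tail i)) ↔
    ¬ ∃ (S : Set V) (C : Set ι) (a : V → ι),
      S.Nonempty ∧
      (∀ v : V, v ∈ S ↔ ∃ i ∈ C, v = tail i ∨ v ∈ heads i) ∧
      (∀ v ∈ S, a v ∈ C ∧ tail (a v) = v) ∧
      (∀ i ∈ C, a (tail i) = i) ∧
      (∀ (p : ℕ) (v : ℕ → V), 1 ≤ p → v 0 ∈ S →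
        (∀ t < p, v (t + 1) ∈ heads (a (v t))) → v p = v 0 →
        (∀ t < p, ∀ t' < p, v t = v t' → t = t') →
        ∑ t ∈ Finset.range p, w (a (v t)) (v (t + 1)) < 0) := by
  classical
  simp only [Finset.inf'_le_iff]
  constructor
  · rintro ⟨s, hs⟩ ⟨S, C, a, ⟨x, hx⟩, hS, ha, -, hneg⟩
    have hstep : ∀ v, ∃ u, v ∈ S → u ∈ heads (a v) ∧ s u - w (a v) u ≤ s v := by
      intro v
      by_cases hv : v ∈ S
      · obtain ⟨u, hu, h⟩ := hs (a v)
        rw [(ha v hv).2] at h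
        exact ⟨u, fun _ => ⟨hu, h⟩⟩
      · exact ⟨v, fun h => absurd h hv⟩
    choose f hf using hstep
    have hfS : ∀ n, ∀ v ∈ S, f^[n] v ∈ S := by
      intro n
      induction n with
      | zero => exact fun v hv => hv
      | succ n ih =>
        intro v hv
        rw [Function.iterate_succ_apply']
        exact (hS _).2 ⟨a (f^[n] v), (ha _ (ih v hv)).1, Or.inr (hf _ (ih v hv)).1⟩
    obtain ⟨m, p, hp, hclose, hinj⟩ := exists_simple_orbit f x
    have hy : f^[m] x ∈ S := hfS m x hx
    generalize f^[m] x = y at hy hclose hinj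
    have hlt := hneg p (fun t => f^[t] y) hp hy
      (fun t _ => by
        simp only [Function.iterate_succ_apply']
        exact (hf _ (hfS t y hy)).1) hclose hinj
    have hge : ∑ t ∈ Finset.range p, (s (f^[t + 1] y) - s (f^[t] y)) ≤
        ∑ t ∈ Finset.range p, w (a (f^[t] y)) (f^[t + 1] y) := by
      refine Finset.sum_le_sum fun t _ => ?_
      have := (hf _ (hfS t y hy)).2
      rw [Function.iterate_succ_apply']
      linarith
    rw [Finset.sum_range_sub (fun t => s (f^[t] y)), hclose] at hge
    simp only [Function.iterate_zero, id_eq, sub_self] at hge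
    exact absurd hlt (not_lt.2 hge)
  · intro hcons
    obtain ⟨s, hs⟩ := exists_schedule_of_forall_choice tail heads w (fun a ha =>
      exists_schedule_of_choice heads w a (by
        intro S hne' hclosed
        by_contra hno
        refine hcons ⟨S, a '' S, a, hne', ?_, ?_, ?_, ?_⟩
        · intro v
          constructor
          · exact fun hv => ⟨a v, ⟨v, hv, rfl⟩, Or.inl (ha v).symm⟩
          · rintro ⟨_, ⟨u, hu, rfl⟩, h | h⟩
            · rwa [h, ha u]
            · exact hclosed u hu v h
        · exact fun v hv => ⟨⟨v, hv, rfl⟩, ha v⟩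
        · rintro _ ⟨u, -, rfl⟩
          rw [ha u]
        · intro p v hp hv0 hst hcl hinj
          by_contra hsum
          exact hno ⟨p, v, hp, hv0, hst, hcl, hinj, not_lt.1 hsum⟩))
      Finset.univ (fun v => (htail v).imp fun i hi => ⟨Finset.mem_univ i, hi⟩)
    exact ⟨s, fun i => hs i (Finset.mem_univ i)⟩
end

section
/- A multi-head HyTN H = (V, A) with integer weights, in which every node is the tail of at least one hyperarc, admits an integral feasible scheduling s : V → ℤ if and only if it is conservative (contains no negative cycle). -/
/-!
If a feasible schedule `s` exists, then in any cycle `(S, C)` each `v ∈ S` has a head `f v` of its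
arc with `s (f v) ≤ s v + w`. Iterating `f` reaches a simple cyclic sequence, along which these
inequalities telescope to a nonnegative total weight, so `(S, C)` is not negative.

The converse rests on two facts.

* `HyTN.exists_potential`: when every node has exactly one arc `a v` and every nonempty set closed
  under taking heads contains a simple cyclic sequence of nonnegative weight, a schedule exists.
  Take a maximal set of nodes carrying a partial schedule. By maximality its complement is closed
  under taking heads, so, if nonempty, it contains a nonnegative simple cyclic sequence, on which
  the partial sums of the weights extend the partial schedule: a contradiction.
* `HyTN.exists_schedule_or_negative_cycle`: if a node `x` is the tail of two distinct arcs
  `i` and `j`, and the networks without `i` and without `j` have feasible schedules `s₁` and `s₂`,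
  then `min (s₁ - s₁ x) (s₂ - s₂ x)` is feasible for the whole network. Hence, by induction on
  the number of arcs, the problem reduces to networks with one arc per node.
-/

namespace HyTN

variable {V ι : Type*}

/-- The subset `S` is closed under the heads of the arcs chosen by `a`, and every simple cyclic
sequence in it has negative weight. -/
def NegClosed (heads : ι → Finset V) (w : ι → V → ℤ) (a : V → ι) (S : Set V) : Prop :=
  (∀ v ∈ S, ∀ u ∈ heads (a v), u ∈ S) ∧
  (∀ (p : ℕ) (v : ℕ → V), 1 ≤ p → v 0 ∈ S →
    (∀ t < p, v (t + 1) ∈ heads (a (v t))) → v p = v 0 →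
    (∀ t < p, ∀ t' < p, v t = v t' → t = t') →
    ∑ t ∈ Finset.range p, w (a (v t)) (v (t + 1)) < 0)

/-- `s` is a schedule on the nodes of `T` for the one-arc-per-node network `a`, each node of `T`
having a witnessing head inside `T`. -/
def PartialSchedule (heads : ι → Finset V) (w : ι → V → ℤ) (a : V → ι) (T : Set V)
    (s : V → ℤ) : Prop :=
  ∀ v ∈ T, ∃ u ∈ heads (a v), u ∈ T ∧ s u ≤ s v + w (a v) u

/-- A partial schedule extends to a nonnegative simple cyclic sequence disjoint from its domain,
by the partial sums of the weights. -/
lemma PartialSchedule.union_cycle {heads : ι → Finset V} {w : ι → V → ℤ} {a : V → ι}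
    {T : Set V} {s : V → ℤ} (hs : PartialSchedule heads w a T s)
    {p : ℕ} {v : ℕ → V} (hp : 1 ≤ p) (hT : ∀ t < p, v t ∉ T)
    (hv : ∀ t < p, v (t + 1) ∈ heads (a (v t))) (hcl : v p = v 0)
    (hinj : ∀ t < p, ∀ t' < p, v t = v t' → t = t')
    (hsum : 0 ≤ ∑ t ∈ Finset.range p, w (a (v t)) (v (t + 1))) :
    ∃ s', PartialSchedule heads w a (T ∪ {x | ∃ t < p, v t = x}) s' := by
  classical
  let P : ℕ → ℤ := fun n => ∑ t ∈ Finset.range n, w (a (v t)) (v (t + 1))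
  let s' : V → ℤ := fun x => if h : ∃ t < p, v t = x then P h.choose else s x
  have hcyc : ∀ t < p, s' (v t) = P t := by
    intro t ht
    have h : ∃ t' < p, v t' = v t := ⟨t, ht, rfl⟩
    have h1 : s' (v t) = P h.choose := dif_pos h
    rw [h1, hinj _ h.choose_spec.1 _ ht h.choose_spec.2]
  have hold : ∀ x ∈ T, s' x = s x := by
    intro x hx
    refine dif_neg ?_
    rintro ⟨t, ht, rfl⟩
    exact hT t ht hx
  refine ⟨s', ?_⟩
  rintro x (hx | ⟨t, ht, rfl⟩)
  · obtain ⟨u, hu, huT, hle⟩ := hs x hx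
    exact ⟨u, hu, Or.inl huT, by rw [hold x hx, hold u huT]; exact hle⟩
  · have hP : P (t + 1) = P t + w (a (v t)) (v (t + 1)) := Finset.sum_range_succ _ _
    rcases Nat.lt_or_ge (t + 1) p with h | h
    · exact ⟨v (t + 1), hv t ht, Or.inr ⟨t + 1, h, rfl⟩, by rw [hcyc t ht, hcyc _ h, hP]⟩
    · -- The closing step returns to `v 0`, whose value `0` is at most the total weight.
      have htp : t + 1 = p := by omega
      have h0 : v (t + 1) = v 0 := by rw [htp, hcl]
      refine ⟨v (t + 1), hv t ht, Or.inr ⟨0, hp, h0.symm⟩, ?_⟩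
      have hP0 : P 0 = 0 := Finset.sum_range_zero _
      have hPp : 0 ≤ P (t + 1) := by rw [htp]; exact hsum
      rw [hcyc t ht, ← hP]
      rw [h0, hcyc 0 hp, hP0]
      exact hPp

/-- A network with one arc per node and no negative cycle is feasible. -/
lemma exists_potential [Finite V] (heads : ι → Finset V) (w : ι → V → ℤ) (a : V → ι)
    (h : ∀ S : Set V, S.Nonempty → ¬ NegClosed heads w a S) :
    ∃ s : V → ℤ, ∀ v, ∃ u ∈ heads (a v), s u ≤ s v + w (a v) u := by
  classical
  obtain ⟨T, hT⟩ := (Set.toFinite {T : Set V | ∃ s, PartialSchedule heads w a T s}).exists_maximal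
    ⟨∅, 0, fun v hv => hv.elim⟩
  obtain ⟨s, hs⟩ := hT.prop
  by_cases hne : (Tᶜ : Set V).Nonempty
  · exfalso
    have hclosed : ∀ v ∈ Tᶜ, ∀ u ∈ heads (a v), u ∈ Tᶜ := by
      intro v hv u hu huT
      -- Otherwise `v` could be added to `T`, with the value forced by its head `u ∈ T`.
      have hins : insert v T ∈ {T : Set V | ∃ s, PartialSchedule heads w a T s} := by
        have hupd : ∀ x ∈ T, Function.update s v (s u - w (a v) u) x = s x := fun x hx =>
          Function.update_of_ne (fun e : x = v => hv (e ▸ hx)) _ _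
        refine ⟨Function.update s v (s u - w (a v) u), ?_⟩
        rintro x (rfl | hx)
        · exact ⟨u, hu, Or.inr huT, by rw [hupd u huT, Function.update_self]; omega⟩
        · obtain ⟨y, hy, hyT, hle⟩ := hs x hx
          exact ⟨y, hy, Or.inr hyT, by rw [hupd x hx, hupd y hyT]; exact hle⟩
      exact hv (hT.le_of_ge hins (Set.subset_insert v T) (Set.mem_insert v T))
    refine h _ hne ⟨hclosed, ?_⟩
    intro p v hp h0 hv hcl hinj
    by_contra hsum
    have hmem : ∀ t ≤ p, v t ∈ Tᶜ := by
      intro t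
      induction t with
      | zero => exact fun _ => h0
      | succ t ih => exact fun ht => hclosed _ (ih (by omega)) _ (hv t (by omega))
    have hext := hs.union_cycle hp (fun t ht => hmem t ht.le) hv hcl hinj (not_lt.mp hsum)
    exact h0 (hT.le_of_ge hext Set.subset_union_left (Or.inr ⟨0, hp, rfl⟩))
  · rw [Set.not_nonempty_iff_eq_empty, Set.compl_empty_iff] at hne
    refine ⟨s, fun v => ?_⟩
    obtain ⟨u, hu, -, hle⟩ := hs v (hne ▸ Set.mem_univ v)
    exact ⟨u, hu, hle⟩

/-- Let `D` be a set of arcs containing, for each node, an arc with that tail. Either some schedule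
satisfies all arcs of `D`, or the network has a negative cycle. -/
lemma exists_schedule_or_negative_cycle [Finite V] (tail : ι → V) (heads : ι → Finset V)
    (w : ι → V → ℤ) (D : Finset ι) (hD : ∀ v, ∃ i ∈ D, tail i = v) :
    (∃ s : V → ℤ, ∀ i ∈ D, ∃ u ∈ heads i, s u ≤ s (tail i) + w i u) ∨
    ∃ (a : V → ι) (S : Set V), (∀ v, tail (a v) = v) ∧ S.Nonempty ∧ NegClosed heads w a S := by
  classical
  induction D using Finset.strongInduction with
  | H D ih =>
  by_cases hinj : ∀ i ∈ D, ∀ j ∈ D, tail i = tail j → i = j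
  · choose a haD ha using hD
    by_cases h : ∃ S : Set V, S.Nonempty ∧ NegClosed heads w a S
    · obtain ⟨S, hS, hneg⟩ := h
      exact Or.inr ⟨a, S, ha, hS, hneg⟩
    · left
      obtain ⟨s, hs⟩ := exists_potential heads w a fun S hS hneg => h ⟨S, hS, hneg⟩
      refine ⟨s, fun i hi => ?_⟩
      have := hs (tail i)
      rwa [hinj _ (haD (tail i)) i hi (ha _)] at this
  · push Not at hinj
    obtain ⟨i, hi, j, hj, hij, hne⟩ := hinj
    have hcov : ∀ k l, l ∈ D → tail k = tail l → l ≠ k →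
        ∀ v, ∃ m ∈ D.erase k, tail m = v := by
      intro k l hl hkl hlk v
      obtain ⟨m, hm, rfl⟩ := hD v
      by_cases hmk : m = k
      · exact ⟨l, Finset.mem_erase.mpr ⟨hlk, hl⟩, by rw [hmk, hkl]⟩
      · exact ⟨m, Finset.mem_erase.mpr ⟨hmk, hm⟩, rfl⟩
    rcases ih _ (Finset.erase_ssubset hi) (hcov i j hj hij hne.symm) with ⟨s₁, h₁⟩ | h
    swap
    · exact Or.inr h
    rcases ih _ (Finset.erase_ssubset hj) (hcov j i hi hij.symm hne) with ⟨s₂, h₂⟩ | h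
    swap
    · exact Or.inr h
    left
    refine ⟨fun v => min (s₁ v - s₁ (tail i)) (s₂ v - s₂ (tail i)), fun k hk => ?_⟩
    -- An arc is satisfied as soon as the schedule attaining the minimum at its tail satisfies it.
    have use₁ : k ≠ i → s₁ (tail k) - s₁ (tail i) ≤ s₂ (tail k) - s₂ (tail i) →
        ∃ u ∈ heads k, min (s₁ u - s₁ (tail i)) (s₂ u - s₂ (tail i)) ≤
          min (s₁ (tail k) - s₁ (tail i)) (s₂ (tail k) - s₂ (tail i)) + w k u := by
      intro hki hle
      obtain ⟨u, hu, hs⟩ := h₁ k (Finset.mem_erase.mpr ⟨hki, hk⟩)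
      exact ⟨u, hu, by omega⟩
    have use₂ : k ≠ j → s₂ (tail k) - s₂ (tail i) ≤ s₁ (tail k) - s₁ (tail i) →
        ∃ u ∈ heads k, min (s₁ u - s₁ (tail i)) (s₂ u - s₂ (tail i)) ≤
          min (s₁ (tail k) - s₁ (tail i)) (s₂ (tail k) - s₂ (tail i)) + w k u := by
      intro hkj hle
      obtain ⟨u, hu, hs⟩ := h₂ k (Finset.mem_erase.mpr ⟨hkj, hk⟩)
      exact ⟨u, hu, by omega⟩
    by_cases hx : tail k = tail i
    · -- At the common tail of `i` and `j` both shifted schedules vanish, so either may be used.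
      by_cases hki : k = i
      · exact use₂ (hki ▸ hne) (by simp [hx])
      · exact use₁ hki (by simp [hx])
    · have hki : k ≠ i := fun e => hx (e ▸ rfl)
      have hkj : k ≠ j := fun e => hx (e ▸ hij.symm)
      rcases le_total (s₁ (tail k) - s₁ (tail i)) (s₂ (tail k) - s₂ (tail i)) with h | h
      · exact use₁ hki h
      · exact use₂ hkj h

/-- A self-map of a finite type has a periodic point on the orbit of every point. -/
lemma exists_iterate_mem_periodicPts [Finite V] (f : V → V) (x : V) :
    ∃ m, f^[m] x ∈ Function.periodicPts f := by
  obtain ⟨m, n, hmn, heq⟩ := Finite.exists_ne_map_eq_of_infinite fun n : ℕ => f^[n] x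
  wlog hlt : m < n generalizing m n
  · exact this n m hmn.symm heq.symm (by omega)
  refine ⟨m, Function.mk_mem_periodicPts (n := n - m) (by omega) ?_⟩
  change f^[n - m] (f^[m] x) = f^[m] x
  rw [← Function.iterate_add_apply, Nat.sub_add_cancel hlt.le]
  exact heq.symm

/-- A schedule satisfied by the chosen arcs on a nonempty `S` rules out that `S` is negative. -/
lemma not_negClosed_of_schedule [Finite V] {heads : ι → Finset V} {w : ι → V → ℤ} {a : V → ι}
    {S : Set V} (hS : S.Nonempty) {s : V → ℤ}
    (hs : ∀ v ∈ S, ∃ u ∈ heads (a v), s u ≤ s v + w (a v) u) : ¬ NegClosed heads w a S := by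
  rintro ⟨hclosed, hneg⟩
  obtain ⟨x, hx⟩ := hS
  have hs' : ∀ v, ∃ u, v ∈ S → u ∈ heads (a v) ∧ s u ≤ s v + w (a v) u := by
    intro v
    by_cases hv : v ∈ S
    · obtain ⟨u, hu⟩ := hs v hv
      exact ⟨u, fun _ => hu⟩
    · exact ⟨v, fun h => (hv h).elim⟩
  choose f hf using hs'
  have hiter : ∀ n, ∀ y ∈ S, f^[n] y ∈ S := by
    intro n y hy
    induction n with
    | zero => exact hy
    | succ n ih =>
      rw [Function.iterate_succ_apply']
      exact hclosed _ ih _ (hf _ ih).1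
  obtain ⟨m, hm⟩ := exists_iterate_mem_periodicPts f x
  have hyS := hiter m x hx
  generalize f^[m] x = y at hm hyS
  have htel : ∀ n, s (f^[n] y) ≤
      s y + ∑ t ∈ Finset.range n, w (a (f^[t] y)) (f^[t + 1] y) := by
    intro n
    induction n with
    | zero => simp
    | succ n ih =>
      have := (hf _ (hiter n y hyS)).2
      rw [Finset.sum_range_succ, Function.iterate_succ_apply']
      omega
  have hper : f^[Function.minimalPeriod f y] y = y := Function.iterate_minimalPeriod
  have hlt := hneg (Function.minimalPeriod f y) (fun t => f^[t] y)
    (Function.minimalPeriod_pos_of_mem_periodicPts hm) hyS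
    (fun t _ => by
      simp only [Function.iterate_succ_apply']
      exact (hf _ (hiter t y hyS)).1)
    hper
    (fun t ht t' ht' h => Function.iterate_injOn_Iio_minimalPeriod ht ht' h)
  have hle := htel (Function.minimalPeriod f y)
  rw [hper] at hle
  omega

end HyTN

/-- A multi-head HyTN `H = (V, A)` with integer weights (hyperarcs indexed by
`ι`, each with tail `tail i`, nonempty head set `heads i` not containing the
tail, and weights `w i`), in which every node is the tail of at least one
hyperarc, admits an integral feasible scheduling `s : V → ℤ` (with
`s (tail i) ≥ min_{u ∈ heads i} (s u - w i u)` for all `i`) iff it is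
conservative, i.e. contains no negative cycle (a cycle being a pair `(S, C)`
with tail-selection function `a`, `S` nonempty and equal to the union of
`{tail i} ∪ heads i` over `i ∈ C`, every `v ∈ S` the tail of exactly one
`a v ∈ C`; negative when every finite cyclic sequence in it has total weight
`< 0`). -/
theorem stmt_8 {V ι : Type*} [Fintype V] [Fintype ι]
    (tail : ι → V) (heads : ι → Finset V) (w : ι → V → ℤ)
    (hne : ∀ i, (heads i).Nonempty) (hnt : ∀ i, tail i ∉ heads i)
    (htail : ∀ v : V, ∃ i, tail i = v) :
    (∃ s : V → ℤ, ∀ i, (heads i).inf' (hne i) (fun u => s u - w i u) ≤ s (tail i)) ↔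
    ¬ ∃ (S : Set V) (C : Set ι) (a : V → ι),
      S.Nonempty ∧
      (∀ v : V, v ∈ S ↔ ∃ i ∈ C, v = tail i ∨ v ∈ heads i) ∧
      (∀ v ∈ S, a v ∈ C ∧ tail (a v) = v) ∧
      (∀ i ∈ C, a (tail i) = i) ∧
      (∀ (p : ℕ) (v : ℕ → V), 1 ≤ p → v 0 ∈ S →
        (∀ t < p, v (t + 1) ∈ heads (a (v t))) → v p = v 0 →
        (∀ t < p, ∀ t' < p, v t = v t' → t = t') →
        ∑ t ∈ Finset.range p, w (a (v t)) (v (t + 1)) < 0) := by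
  constructor
  · rintro ⟨s, hs⟩ ⟨S, C, a, hS, hSC, haS, -, hneg⟩
    refine HyTN.not_negClosed_of_schedule hS (s := s) (w := w) (heads := heads) (a := a) ?_
      ⟨?_, hneg⟩
    · intro v hv
      obtain ⟨u, hu, hle⟩ := (Finset.inf'_le_iff _).mp (hs (a v))
      rw [(haS v hv).2] at hle
      exact ⟨u, hu, by omega⟩
    · exact fun v hv u hu => (hSC u).mpr ⟨a v, (haS v hv).1, Or.inr hu⟩
  · intro hcons
    rcases HyTN.exists_schedule_or_negative_cycle tail heads w Finset.univ
      (fun v => (htail v).imp fun i hi => ⟨Finset.mem_univ i, hi⟩) with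
      ⟨s, hs⟩ | ⟨a, S, ha, hS, hclosed, hneg⟩
    · refine ⟨s, fun i => ?_⟩
      obtain ⟨u, hu, hle⟩ := hs i (Finset.mem_univ i)
      exact (Finset.inf'_le_iff _).mpr ⟨u, hu, by omega⟩
    · refine (hcons ⟨S, a '' S, a, hS, fun v => ⟨fun hv => ?_, ?_⟩, fun v hv => ?_, ?_, hneg⟩).elim
      · exact ⟨a v, ⟨v, hv, rfl⟩, Or.inl (ha v).symm⟩
      · rintro ⟨_, ⟨x, hx, rfl⟩, h | h⟩
        · rw [h, ha x]
          exact hx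
        · exact hclosed x hx v h
      · exact ⟨⟨v, hv, rfl⟩, ha v⟩
      · rintro _ ⟨x, -, rfl⟩
        rw [ha x]
end

section
/- Let H = (V, A) be a consistent multi-head HyTN. Then there exists a selection π assigning to every hyperarc A ∈ A a head π(A) ∈ H_A such that the weighted directed graph on V whose arcs are (t_A, π(A)) with weight w_A(π(A)), for A ∈ A, is conservative: every directed cycle of this graph has nonnegative total weight. (In game terms: if H is consistent, then in the mean payoff game G_H obtained from H every node is a winning start position for Player 1, the selection π being a positional winning strategy.) -/
/-!
A feasible scheduling `s` is a potential. Selecting in each hyperarc a head that attains the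
minimum of `s u - w i u` makes every selected arc satisfy `s (π i) - s (tail i) ≤ w i (π i)`;
around a directed cycle the left-hand sides telescope to `0`, so the total weight is nonnegative.
-/

/-- If a multi-head HyTN `H = (V, A)` (hyperarcs indexed by `ι`, each with
tail `tail i`, nonempty head set `heads i` not containing the tail, and real
weights `w i`) is consistent, then there is a selection `π` of one head per
hyperarc such that the weighted directed graph on `V` with one arc
`(tail i, π i)` of weight `w i (π i)` per hyperarc is conservative: every
directed cycle of this graph (encoded as a cyclic sequence
`c : ZMod (ℓ+1) → ι` of arc indices in which the selected head of each arc is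
the tail of the next) has nonnegative total weight.  (Game-theoretically:
every node of the mean payoff game `G_H` is a winning start position for
Player 1, with `π` a positional winning strategy.) -/
theorem stmt_9 {V ι : Type*} [Fintype V] [Fintype ι]
    (tail : ι → V) (heads : ι → Finset V) (w : ι → V → ℝ)
    (hne : ∀ i, (heads i).Nonempty) (hnt : ∀ i, tail i ∉ heads i)
    (hcons : ∃ s : V → ℝ, ∀ i, (heads i).inf' (hne i) (fun u => s u - w i u) ≤ s (tail i)) :
    ∃ π : ι → V, (∀ i, π i ∈ heads i) ∧
      ∀ (ℓ : ℕ) (c : ZMod (ℓ + 1) → ι),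
        (∀ k, π (c k) = tail (c (k + 1))) → 0 ≤ ∑ k, w (c k) (π (c k)) := by
  obtain ⟨s, hs⟩ := hcons
  -- `π i` is a head attaining the minimum, so `s` is a potential for the selected graph.
  choose π hπ hmin using fun i => (heads i).exists_mem_eq_inf' (hne i) (fun u => s u - w i u)
  refine ⟨π, hπ, fun ℓ c hc => ?_⟩
  have hle : ∀ k, s (tail (c (k + 1))) - s (tail (c k)) ≤ w (c k) (π (c k)) := by
    intro k
    have h := hs (c k)
    rw [hmin (c k)] at h
    rw [← hc k]
    linarith
  -- The potential differences telescope around the cycle: `k ↦ k + 1` permutes `ZMod (ℓ + 1)`.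
  have hshift : ∑ k, s (tail (c (k + 1))) = ∑ k, s (tail (c k)) :=
    Equiv.sum_comp (Equiv.addRight (1 : ZMod (ℓ + 1))) (fun k => s (tail (c k)))
  calc (0 : ℝ) = ∑ k, (s (tail (c (k + 1))) - s (tail (c k))) := by
        rw [Finset.sum_sub_distrib, hshift, sub_self]
    _ ≤ ∑ k, w (c k) (π (c k)) := Finset.sum_le_sum fun k _ => hle k
end

section
/- Let H = (V, A) be a multi-head HyTN. Suppose there exists a selection π assigning to every hyperarc A ∈ A a head π(A) ∈ H_A such that the weighted directed graph on V whose arcs are (t_A, π(A)) with weight w_A(π(A)), for A ∈ A, is conservative (every directed cycle has nonnegative total weight). Then H is consistent: any feasible potential p of this graph, restricted to V, is a feasible scheduling of H. (In game terms: if every node of the mean payoff game G_H is a winning start position for Player 1, then H is consistent.) -/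
/-!
A feasible potential `p` satisfies `p (π i) - w i (π i) ≤ p (tail i)`, and the minimum over
`heads i` is at most the term of the selected head `π i`; hence `p` is a feasible scheduling.

For consistency it remains to produce a feasible potential of the selected graph. Walks are lists
of arcs in which the head of each arc is the tail of the next. A walk that repeats an arc `i`
contains a closed walk starting with `i`, whose weight is nonnegative, so deleting it does not
increase the weight. Iterating, the weight of every walk is at least that of some walk without
repeated arcs, hence at least `-∑ i, |x i|`, where `x i` is the weight of arc `i`
(`walk_weight_bounded`). So the infimum `q v` of the weights of the walks starting at `v` is
finite; prepending an arc gives `q (tail i) ≤ x i + q (π i)`, i.e. `-q` is a feasible potential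
(`exists_potential`).
-/

theorem exists_repeat_of_not_nodup {ι : Type*} (l : List ι) (h : ¬ l.Nodup) :
    ∃ a i b c, l = a ++ i :: (b ++ i :: c) := by
  induction l with
  | nil => simp at h
  | cons x l ih =>
    by_cases hx : x ∈ l
    · obtain ⟨b, c, rfl⟩ := List.append_of_mem hx
      exact ⟨[], x, b, c, rfl⟩
    · have h' : ¬ l.Nodup := fun hl => h (List.nodup_cons.2 ⟨hx, hl⟩)
      obtain ⟨a, i, b, c, rfl⟩ := ih h'
      exact ⟨x :: a, i, b, c, rfl⟩

/-- Translates conservativity from cyclic sequences indexed by `ZMod (ℓ + 1)` to closed walks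
given as lists: `i :: b` is closed when it can be followed by `i` again. -/
theorem closed_walk_nonneg {V ι : Type*} (tail head : ι → V) (x : ι → ℝ)
    (hcsv : ∀ (ℓ : ℕ) (c : ZMod (ℓ + 1) → ι),
      (∀ k, head (c k) = tail (c (k + 1))) → 0 ≤ ∑ k, x (c k))
    (i : ι) (b : List ι)
    (hch : List.IsChain (fun j k => head j = tail k) (i :: b ++ [i])) :
    0 ≤ ((i :: b).map x).sum := by
  -- `ZMod (b.length + 1)` unfolds to `Fin (b.length + 1)`.
  have key := hcsv b.length (fun k : Fin (b.length + 1) => (i :: b)[k.val]'k.isLt) ?_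
  · have e : ((i :: b).map x).sum
        = ∑ k : Fin (b.length + 1), x ((i :: b)[k.val]'k.isLt) :=
      (Fin.sum_univ_fun_getElem (i :: b) x).symm
    rw [e]
    exact key
  · intro (k : Fin (b.length + 1))
    have hk := k.isLt
    rw [List.isChain_iff_getElem] at hch
    have h1 := hch k.val (by simp; omega)
    have h2 : (i :: b ++ [i])[k.val]'(by simp) = (i :: b)[k.val]'hk :=
      List.getElem_append_left _
    have h3 : (i :: b ++ [i])[k.val + 1]'(by simp; omega)
        = (i :: b)[(k + 1 : Fin (b.length + 1)).val]'(k + 1).isLt := by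
      by_cases hlast : k.val = b.length
      · have : k = Fin.last b.length := Fin.ext hlast
        subst this
        simp
      · have hv : (k + 1 : Fin (b.length + 1)).val = k.val + 1 :=
          Fin.val_add_one_of_lt' (by omega)
        simp only [hv]
        exact List.getElem_append_left (by simp; omega)
    rw [h2, h3] at h1
    exact h1

theorem walk_weight_bounded {V ι : Type*} [Fintype ι] (tail head : ι → V) (x : ι → ℝ)
    (hcsv : ∀ (ℓ : ℕ) (c : ZMod (ℓ + 1) → ι),
      (∀ k, head (c k) = tail (c (k + 1))) → 0 ≤ ∑ k, x (c k))
    (l : List ι) (hch : List.IsChain (fun j k => head j = tail k) l) :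
    -∑ i, |x i| ≤ (l.map x).sum := by
  classical
  induction hn : l.length using Nat.strong_induction_on generalizing l with
  | _ n ih =>
    by_cases hl : l.Nodup
    · rw [← List.sum_toFinset x hl]
      have h1 : ∑ i ∈ l.toFinset, |x i| ≤ ∑ i, |x i| :=
        Finset.sum_le_sum_of_subset_of_nonneg (Finset.subset_univ _) fun i _ _ => abs_nonneg _
      have h2 := neg_abs_le (∑ i ∈ l.toFinset, x i)
      have h3 := Finset.abs_sum_le_sum_abs x l.toFinset
      linarith
    · obtain ⟨a, i, b, c, rfl⟩ := exists_repeat_of_not_nodup l hl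
      rw [List.isChain_split] at hch
      obtain ⟨ha, hbc⟩ := hch
      rw [← List.cons_append, List.isChain_split] at hbc
      obtain ⟨hb, hc⟩ := hbc
      have h0 := closed_walk_nonneg tail head x hcsv i b hb
      have h1 := ih (a ++ i :: c).length (by subst hn; simp) (a ++ i :: c)
        (List.isChain_split.2 ⟨ha, hc⟩) rfl
      simp only [List.map_append, List.map_cons, List.sum_append, List.sum_cons] at h0 h1 ⊢
      linarith

/-- A conservative weighted directed graph with finitely many arcs has a feasible potential. -/
theorem exists_potential {V ι : Type*} [Fintype ι] (tail head : ι → V) (x : ι → ℝ)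
    (hcsv : ∀ (ℓ : ℕ) (c : ZMod (ℓ + 1) → ι),
      (∀ k, head (c k) = tail (c (k + 1))) → 0 ≤ ∑ k, x (c k)) :
    ∃ p : V → ℝ, ∀ i, 0 ≤ x i - p (head i) + p (tail i) := by
  -- `W v` is the type of walks starting at `v`; the empty walk starts everywhere.
  let W : V → Type _ := fun v => {l : List ι //
    (∀ y ∈ l.head?, v = tail y) ∧ List.IsChain (fun j k => head j = tail k) l}
  have hW : ∀ v, Nonempty (W v) := fun v => ⟨⟨[], by simp, List.isChain_nil⟩⟩
  have hbdd : ∀ v, BddBelow (Set.range fun l : W v => (l.1.map x).sum) := fun v =>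
    ⟨_, Set.forall_mem_range.2 fun l => walk_weight_bounded tail head x hcsv l.1 l.2.2⟩
  refine ⟨fun v => -⨅ l : W v, (l.1.map x).sum, fun i => ?_⟩
  have h : (⨅ l : W (tail i), (l.1.map x).sum) - x i ≤ ⨅ l : W (head i), (l.1.map x).sum := by
    have := hW (head i)
    refine le_ciInf fun l => ?_
    have h1 := ciInf_le (hbdd (tail i)) ⟨i :: l.1, by simp, List.isChain_cons.2 l.2⟩
    simp only [List.map_cons, List.sum_cons] at h1
    linarith
  linarith

/-- Let `H = (V, A)` be a multi-head HyTN (hyperarcs indexed by `ι`, each with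
tail `tail i`, nonempty head set `heads i` not containing the tail, and real
weights `w i`), and suppose a selection `π` of one head per hyperarc is such
that the weighted directed graph on `V` with one arc `(tail i, π i)` of weight
`w i (π i)` per hyperarc is conservative (every directed cycle, encoded as a
cyclic sequence `c : ZMod (ℓ+1) → ι` of arc indices where the selected head of
each arc is the tail of the next, has nonnegative total weight).  Then every
feasible potential `p` of this graph is a feasible scheduling of `H`, and `H`
is consistent. -/
theorem stmt_10 {V ι : Type*} [Fintype V] [Fintype ι]
    (tail : ι → V) (heads : ι → Finset V) (w : ι → V → ℝ)
    (hne : ∀ i, (heads i).Nonempty) (hnt : ∀ i, tail i ∉ heads i)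
    (π : ι → V) (hπ : ∀ i, π i ∈ heads i)
    (hcsv : ∀ (ℓ : ℕ) (c : ZMod (ℓ + 1) → ι),
      (∀ k, π (c k) = tail (c (k + 1))) → 0 ≤ ∑ k, w (c k) (π (c k))) :
    (∀ p : V → ℝ, (∀ i, 0 ≤ w i (π i) - p (π i) + p (tail i)) →
      ∀ i, (heads i).inf' (hne i) (fun u => p u - w i u) ≤ p (tail i)) ∧
    (∃ s : V → ℝ, ∀ i, (heads i).inf' (hne i) (fun u => s u - w i u) ≤ s (tail i)) := by
  have hsched : ∀ p : V → ℝ, (∀ i, 0 ≤ w i (π i) - p (π i) + p (tail i)) →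
      ∀ i, (heads i).inf' (hne i) (fun u => p u - w i u) ≤ p (tail i) := fun p hp i =>
    (Finset.inf'_le (fun u => p u - w i u) (hπ i)).trans (by linarith [hp i])
  obtain ⟨p, hp⟩ := exists_potential tail π (fun i => w i (π i)) hcsv
  exact ⟨hsched, p, hsched p hp⟩
end

section
/- Let H = (V, A) be a multi-head HyTN and let v ∈ V be a sink node, i.e., no hyperarc of A has tail v. Let H_v be the multi-head HyTN obtained from H by removing the node v and every hyperarc having v among its heads. Then H is consistent if and only if H_v is consistent. -/
/-!
A feasible scheduling of `H` restricts to one of `H_v`, since the remaining hyperarcs do not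
involve `v`. Conversely, a feasible scheduling of `H_v` extends to `H` by giving the sink `v`
any value at most `s (tail i) + w i v` for every hyperarc `i`; such a value exists because there
are finitely many hyperarcs.
-/

/-- Let `H = (V, A)` be a multi-head HyTN (hyperarcs indexed by `ι`, each with
tail `tail i`, nonempty head set `heads i` not containing the tail, and real
weights `w i`) and let `v` be a sink node (no hyperarc has tail `v`).  Let
`H_v` be the HyTN obtained by removing the node `v` (nodes become the subtype
`{u // u ≠ v}`) and every hyperarc having `v` among its heads (hyperarcs
become the subtype `{i // v ∉ heads i}`, with head sets restricted to the new
node set).  Then `H` is consistent iff `H_v` is consistent. -/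
theorem stmt_12 {V ι : Type*} [Fintype V] [Fintype ι] [DecidableEq V]
    (tail : ι → V) (heads : ι → Finset V) (w : ι → V → ℝ)
    (hne : ∀ i, (heads i).Nonempty) (hnt : ∀ i, tail i ∉ heads i)
    (v : V) (hsink : ∀ i, tail i ≠ v) :
    (∃ s : V → ℝ, ∀ i, (heads i).inf' (hne i) (fun u => s u - w i u) ≤ s (tail i)) ↔
    (∃ s : {u : V // u ≠ v} → ℝ, ∀ i : {i : ι // v ∉ heads i},
      ((heads i.1).subtype (· ≠ v)).inf'
          (by
            obtain ⟨u, hu⟩ := hne i.1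
            exact ⟨⟨u, fun h => i.2 (h ▸ hu)⟩, Finset.mem_subtype.mpr hu⟩)
          (fun u => s u - w i.1 u.1) ≤ s ⟨tail i.1, hsink i.1⟩) := by
  simp only [Finset.inf'_le_iff]
  constructor
  · rintro ⟨s, hs⟩
    refine ⟨fun u => s u.1, fun i => ?_⟩
    obtain ⟨u, hu, hle⟩ := hs i.1
    exact ⟨⟨u, fun h => i.2 (h ▸ hu)⟩, Finset.mem_subtype.mpr hu, hle⟩
  · rintro ⟨s, hs⟩
    -- With `v` scheduled at `c`, the head `v` alone satisfies every removed hyperarc.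
    obtain ⟨c, hc⟩ :=
      (Set.finite_range fun i => s ⟨tail i, hsink i⟩ + w i v).bddBelow
    refine ⟨fun u => if h : u = v then c else s ⟨u, h⟩, fun i => ?_⟩
    by_cases hv : v ∈ heads i
    · refine ⟨v, hv, ?_⟩
      have hci : c ≤ s ⟨tail i, hsink i⟩ + w i v := hc ⟨i, rfl⟩
      simp only [dif_pos, dif_neg (hsink i)]
      linarith
    · obtain ⟨u, hu, hle⟩ := hs ⟨i, hv⟩
      refine ⟨u.1, Finset.mem_subtype.mp hu, ?_⟩
      simpa only [dif_neg u.2, dif_neg (hsink i)] using hle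
end
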